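/- (i) A uniformly continuous Markov system M is consistent if and only if F(Λ) ∈ P(M) for every Λ ∈ E_⊥(M). (ii) M is consistent if M is uniformly continuous and (Rf)(F(σ)) ≤ (Uf)(F(σ)) for every σ ∈ F^{−1}(Ω) and every bounded nonnegative Borel function f on K. -/

import Mathlib

open MeasureTheory Filter Topology
open scoped ENNReal NNReal Classical

noncomputable section

/-- A countable Markov system `(K_{i(e)}, w_e, p_e)_{e ∈ E}` on a metric space `K`:
a partition `(K_j)_{j ∈ N}` of `K` into nonempty Borel sets, source and target maps
`i, t : E → N` (`i` surjective), and for each `e ∈ E` Borel maps `w_e` and probability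
functions `p_e` (extended by zero outside `K_{i(e)}`) with
`∑_{e, i(e)=j} p_e(y) = 1` for `y ∈ K_j`. -/
structure MarkovSystem (K : Type*) [MetricSpace K] [MeasurableSpace K]
    (N : Type*) (E : Type*) where
  Kset : N → Set K
  Kset_nonempty : ∀ j, (Kset j).Nonempty
  Kset_measurable : ∀ j, MeasurableSet (Kset j)
  Kset_disjoint : Pairwise (Function.onFun Disjoint Kset)
  Kset_cover : (⋃ j, Kset j) = Set.univ
  i : E → N
  t : E → N
  i_surj : Function.Surjective i
  w : E → K → K
  p : E → K → ℝ
  w_measurable : ∀ e, Measurable (w e)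
  p_measurable : ∀ e, Measurable (p e)
  p_nonneg : ∀ e x, 0 ≤ p e x
  p_le_one : ∀ e x, p e x ≤ 1
  p_zero_outside : ∀ e x, x ∉ Kset (i e) → p e x = 0
  w_mapsTo : ∀ e, Set.MapsTo (w e) (Kset (i e)) (Kset (t e))
  p_pos_somewhere : ∀ e, ∃ x ∈ Kset (i e), 0 < p e x
  p_tsum_one : ∀ j, ∀ x ∈ Kset j, (∑' e : {e : E // i e = j}, p e.val x) = 1

/-- `Ē = E ∪ {∞}` (one-point compactification); with `E` countable its Borel σ-algebra
consists of all subsets. -/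
instance optionMeasurableSpace (E : Type*) : MeasurableSpace (Option E) := ⊤

/-- The code space `Σ̄ = Ē^ℤ`, carrying the product σ-algebra. -/
abbrev CodeSpace (E : Type*) : Type _ := ℤ → Option E

/-- The left shift `S` on the code space, `(Sσ)_{k-1} = σ_k`. -/
def shiftMap (E : Type*) : CodeSpace E → CodeSpace E := fun σ k => σ (k + 1)

/-- The cylinder set `_m[es₀, …, es_{n}] = {σ : σ_{m+k} = es_k}`. -/
def cylSetL {E : Type*} (m : ℤ) (es : List (Option E)) : Set (CodeSpace E) :=
  {σ | ∀ (k : ℕ) (h : k < es.length), σ (m + (k : ℤ)) = es.get ⟨k, h⟩}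

/-- The σ-algebra `𝓕` generated by the cylinder sets `_m[e_m, …, e_0]`, `m ≤ 0`. -/
def pastAlgebra (E : Type*) : MeasurableSpace (CodeSpace E) :=
  MeasurableSpace.generateFrom
    {A | ∃ es : List (Option E), es ≠ [] ∧ A = cylSetL (1 - (es.length : ℤ)) es}

/-- The conditional entropy `h_S(Λ) = H_Λ((_1[e])_{e ∈ Ē} | 𝓕)`. -/
def entropyS {E : Type*} (Λ : Measure (CodeSpace E)) : ℝ≥0∞ :=
  ∑' eo : Option E,
    ∫⁻ σ, ENNReal.ofReal
        (Real.negMulLog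
          ((Λ[Set.indicator {τ : CodeSpace E | τ 1 = eo} (fun _ => (1 : ℝ)) | pastAlgebra E]) σ)) ∂Λ

namespace MarkovSystem

variable {K : Type*} [MetricSpace K] [MeasurableSpace K] {N E : Type*}

/-- The Markov operator `Uf = ∑_e p_e · (f ∘ w_e)` acting on nonnegative Borel functions. -/
def markovOp (M : MarkovSystem K N E) (f : K → ℝ≥0∞) : K → ℝ≥0∞ :=
  fun x => ∑' e : E, ENNReal.ofReal (M.p e x) * f (M.w e x)

/-- The adjoint operator `U*` acting on measures, `(U*ν)(B) = ∫ U(1_B) dν`. -/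
def adjOp (M : MarkovSystem K N E) (ν : Measure K) : Measure K :=
  Measure.sum fun e : E =>
    Measure.map (M.w e) (ν.withDensity fun x => ENNReal.ofReal (M.p e x))

/-- `μ ∈ P(M)`: `μ` is an invariant Borel probability measure, `U*μ = μ`. -/
def IsInvariantMeasure (M : MarkovSystem K N E) (μ : Measure K) : Prop :=
  IsProbabilityMeasure μ ∧ M.adjOp μ = μ

/-- The path space `Σ_G`: all coordinates lie in `E` and `i(σ_{n+1}) = t(σ_n)`. -/
def pathSpace (M : MarkovSystem K N E) : Set (CodeSpace E) :=
  {σ | ∀ n : ℤ, ∃ e e' : E, σ n = some e ∧ σ (n + 1) = some e' ∧ M.i e' = M.t e}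

/-- `T_j = {σ ∈ Σ_G : t(σ_0) = j}`. -/
def Tset (M : MarkovSystem K N E) (j : N) : Set (CodeSpace E) :=
  {σ | σ ∈ M.pathSpace ∧ ∃ e : E, σ 0 = some e ∧ M.t e = j}

/-- `w` extended to `Ē`, with `w_∞ = id`. -/
def wext (M : MarkovSystem K N E) : Option E → K → K := fun o => o.elim id M.w

/-- `p` extended to `Ē`, with `p_∞ = 0`. -/
def pext (M : MarkovSystem K N E) : Option E → K → ℝ := fun o => o.elim (fun _ => 0) M.p

/-- `i` extended to `Ē`, with `i(∞) = j₀`. -/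
def iext (M : MarkovSystem K N E) (j0 : N) : Option E → N := fun o => o.elim j0 M.i

/-- `t` extended to `Ē`, with `t(∞) = j₀`. -/
def text (M : MarkovSystem K N E) (j0 : N) : Option E → N := fun o => o.elim j0 M.t

/-- `iterW M σ n y = w_{σ_0} ∘ w_{σ_{-1}} ∘ ⋯ ∘ w_{σ_{-n}} (y)`. -/
def iterW (M : MarkovSystem K N E) (σ : CodeSpace E) : ℕ → K → K
  | 0, y => M.wext (σ 0) y
  | n + 1, y => M.iterW σ n (M.wext (σ (-(n + 1 : ℤ))) y)

/-- `orbit M j0 xp σ n = w_{σ_0} ∘ ⋯ ∘ w_{σ_{-n}} (x_{i(σ_{-n})})`. -/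
def orbit (M : MarkovSystem K N E) (j0 : N) (xp : N → K) (σ : CodeSpace E) (n : ℕ) : K :=
  M.iterW σ n (xp (M.iext j0 (σ (-(n : ℤ)))))

/-- `D`: the set of `σ ∈ Σ_G` for which `lim_{m → -∞} w_{σ_0} ∘ ⋯ ∘ w_{σ_m}(x_{i(σ_m)})` exists. -/
def codeDomain (M : MarkovSystem K N E) (j0 : N) (xp : N → K) : Set (CodeSpace E) :=
  {σ | σ ∈ M.pathSpace ∧ ∃ l : K, Tendsto (fun n : ℕ => M.orbit j0 xp σ n) atTop (𝓝 l)}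

/-- The coding map `F`: the above limit on `D`, and `x_{t(σ_0)}` elsewhere. -/
def code (M : MarkovSystem K N E) (j0 : N) (xp : N → K) (σ : CodeSpace E) : K :=
  if h : σ ∈ M.codeDomain j0 xp then h.2.choose else xp (M.text j0 (σ 0))

/-- `Λ ∈ E(M)`: `Λ` is a shift-invariant Borel probability measure with `Λ(D) = 1` and
`E_Λ(1_{_1[e]} | 𝓕) = p_e ∘ F` `Λ`-a.e. for every `e ∈ E` (an equilibrium state). -/
def IsEquilibrium (M : MarkovSystem K N E) (j0 : N) (xp : N → K)
    (Λ : Measure (CodeSpace E)) : Prop :=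
  IsProbabilityMeasure Λ ∧ Measure.map (shiftMap E) Λ = Λ ∧
    Λ (M.codeDomain j0 xp) = 1 ∧
    ∀ e : E,
      (Λ[Set.indicator {σ : CodeSpace E | σ 1 = some e} (fun _ => (1 : ℝ)) | pastAlgebra E])
        =ᵐ[Λ] fun σ => M.p e (M.code j0 xp σ)

/-- `pbar` is the family of continuous extensions `p̄_e` of `p_e|_{K_{i(e)}}` to the closure
of `K_{i(e)}`, extended further by zero on `K`. -/
def IsUCExtensionP (M : MarkovSystem K N E) (pbar : E → K → ℝ) : Prop :=
  ∀ e : E, ContinuousOn (pbar e) (closure (M.Kset (M.i e))) ∧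
    (∀ x ∈ M.Kset (M.i e), pbar e x = M.p e x) ∧
    (∀ x, x ∉ closure (M.Kset (M.i e)) → pbar e x = 0)

/-- `wb` is a family of continuous extensions `w̄_e` of `w_e|_{K_{i(e)}}` to the closure
of `K_{i(e)}`. -/
def IsUCExtensionW (M : MarkovSystem K N E) (wb : E → K → K) : Prop :=
  ∀ e : E, ContinuousOn (wb e) (closure (M.Kset (M.i e))) ∧
    (∀ x ∈ M.Kset (M.i e), wb e x = M.w e x)

/-- The Markov system is uniformly continuous: each `w_e|_{K_{i(e)}}` and `p_e|_{K_{i(e)}}`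
is uniformly continuous. -/
def IsUniformlyContinuous (M : MarkovSystem K N E) : Prop :=
  ∀ e : E, UniformContinuousOn (M.w e) (M.Kset (M.i e)) ∧
    UniformContinuousOn (M.p e) (M.Kset (M.i e))

/-- `∂p_e = p̄_e · 1_{cl(K_{i(e)}) \ K_{i(e)}}`. -/
def dp (M : MarkovSystem K N E) (pbar : E → K → ℝ) (e : E) : K → ℝ :=
  Set.indicator (closure (M.Kset (M.i e)) \ M.Kset (M.i e)) (pbar e)

/-- `Λ ∈ Ẽ(M)` (asymptotic state): shift-invariant probability with `Λ(D) = 1` and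
`E_Λ(1_{_1[e]} | 𝓕) = (p̄_e ∘ F)·1_{T_{i(e)}}` `Λ`-a.e. for every `e`. -/
def IsAsymptotic (M : MarkovSystem K N E) (j0 : N) (xp : N → K) (pbar : E → K → ℝ)
    (Λ : Measure (CodeSpace E)) : Prop :=
  IsProbabilityMeasure Λ ∧ Measure.map (shiftMap E) Λ = Λ ∧
    Λ (M.codeDomain j0 xp) = 1 ∧
    ∀ e : E,
      (Λ[Set.indicator {σ : CodeSpace E | σ 1 = some e} (fun _ => (1 : ℝ)) | pastAlgebra E])
        =ᵐ[Λ] Set.indicator (M.Tset (M.i e)) (fun σ => pbar e (M.code j0 xp σ))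

/-- `Λ ∈ E_⊥(M)`: shift-invariant probability with `Λ(D) = 1` and
`E_Λ(1_{_1[e]} | 𝓕) = (∂p_e ∘ F)·1_{T_{i(e)}}` `Λ`-a.e. for every `e`. -/
def IsPerp (M : MarkovSystem K N E) (j0 : N) (xp : N → K) (pbar : E → K → ℝ)
    (Λ : Measure (CodeSpace E)) : Prop :=
  IsProbabilityMeasure Λ ∧ Measure.map (shiftMap E) Λ = Λ ∧
    Λ (M.codeDomain j0 xp) = 1 ∧
    ∀ e : E,
      (Λ[Set.indicator {σ : CodeSpace E | σ 1 = some e} (fun _ => (1 : ℝ)) | pastAlgebra E])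
        =ᵐ[Λ] Set.indicator (M.Tset (M.i e)) (fun σ => M.dp pbar e (M.code j0 xp σ))

/-- `G = ⋃_{k ≥ 0} ⋃_{j ∈ N} S^{-k}(F^{-1}(K_j) ∩ T_j)`. -/
def Gset (M : MarkovSystem K N E) (j0 : N) (xp : N → K) : Set (CodeSpace E) :=
  ⋃ (k : ℕ) (j : N), (shiftMap E)^[k] ⁻¹' ((M.code j0 xp) ⁻¹' (M.Kset j) ∩ M.Tset j)

/-- `M` is non-degenerate: for every asymptotic state `Λ` there is `i ∈ N` with
`Λ(T_i ∩ F^{-1}(K_i)) > 0`. -/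
def IsNonDegenerate (M : MarkovSystem K N E) (j0 : N) (xp : N → K) (pbar : E → K → ℝ) : Prop :=
  ∀ Λ : Measure (CodeSpace E), M.IsAsymptotic j0 xp pbar Λ →
    ∃ i : N, 0 < Λ (M.Tset i ∩ (M.code j0 xp) ⁻¹' (M.Kset i))

/-- `M` is consistent: `F(Λ) ∈ P(M)` for every asymptotic state `Λ`. -/
def IsConsistent (M : MarkovSystem K N E) (j0 : N) (xp : N → K) (pbar : E → K → ℝ) : Prop :=
  ∀ Λ : Measure (CodeSpace E), M.IsAsymptotic j0 xp pbar Λ →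
    M.IsInvariantMeasure (Measure.map (M.code j0 xp) Λ)

/-- `Rf = ∑_e ∂p_e · (f ∘ w̄_e)`. -/
def Rop (M : MarkovSystem K N E) (pbar : E → K → ℝ) (wb : E → K → K)
    (f : K → ℝ≥0∞) : K → ℝ≥0∞ :=
  fun x => ∑' e : E, ENNReal.ofReal (M.dp pbar e x) * f (wb e x)

/-- `Ω = ⋂_{n ≥ 1} {R^n 1 ≥ 1}`. -/
def OmegaSet (M : MarkovSystem K N E) (pbar : E → K → ℝ) (wb : E → K → K) : Set K :=
  ⋂ n : ℕ, {x : K | 1 ≤ (M.Rop pbar wb)^[n + 1] (fun _ => 1) x}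

/-- `ξ_j = ∑_{e, i(e) = j} sup_{x ∈ K_j} p_e(x)`. -/
def xi (M : MarkovSystem K N E) (j : N) : ℝ≥0∞ :=
  ∑' e : {e : E // M.i e = j}, ⨆ x ∈ M.Kset j, ENNReal.ofReal (M.p e.val x)

/-- `M` has a dominating Markov chain: `ξ_j < ∞` for all `j ∈ N`. -/
def HasDominatingChain (M : MarkovSystem K N E) : Prop := ∀ j : N, M.xi j ≠ ⊤

/-- `ξ_j · q_{j j'} = ∑_{e, i(e) = j, t(e) = j'} sup_{x ∈ K_j} p_e(x)`. -/
def xiq (M : MarkovSystem K N E) (j j' : N) : ℝ≥0∞ :=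
  ∑' e : {e : E // M.i e = j ∧ M.t e = j'}, ⨆ x ∈ M.Kset j, ENNReal.ofReal (M.p e.val x)

/-- `c = ∑_{j'} sup_j ξ_j q_{j j'}`. -/
def cConst (M : MarkovSystem K N E) : ℝ≥0∞ := ∑' j' : N, ⨆ j : N, M.xiq j j'

/-- `α^{x_0}_n({j}) = (1/n) ∑_{k=1}^n ((U*)^k δ_{x_0})(K_j)`. -/
def alphaMeas (M : MarkovSystem K N E) (x0 : K) (n : ℕ) (j : N) : ℝ≥0∞ :=
  (n : ℝ≥0∞)⁻¹ * ∑ k ∈ Finset.range n, (M.adjOp^[k + 1] (Measure.dirac x0)) (M.Kset j)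

/-- Condition (T) at `x_0`: the sequence `(α^{x_0}_n)_n` is uniformly tight. -/
def ConditionT (M : MarkovSystem K N E) (x0 : K) : Prop :=
  ∀ ε : ℝ, 0 < ε → ∃ V : Finset N,
    ∀ n : ℕ, (∑' j : {j : N // j ∉ V}, M.alphaMeas x0 (n + 1) j.val) < ENNReal.ofReal ε

/-- `M` is contractive with contraction rate `a`:
`∑_{e, i(e) = j} p_e(x) d(w_e x, w_e y) ≤ a·d(x, y)` on each `K_j`. -/
def IsContractive (M : MarkovSystem K N E) (a : ℝ) : Prop :=
  ∀ j : N, ∀ x ∈ M.Kset j, ∀ y ∈ M.Kset j,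
    (∑' e : {e : E // M.i e = j},
        ENNReal.ofReal (M.p e.val x * dist (M.w e.val x) (M.w e.val y)))
      ≤ ENNReal.ofReal (a * dist x y)

/-- `L(x) = ∑_j d(x, x_j)·1_{K_j}(x)`. -/
def Lfun (M : MarkovSystem K N E) (xp : N → K) : K → ℝ≥0∞ :=
  fun x => ∑' j : N, Set.indicator (M.Kset j) (fun y => ENNReal.ofReal (dist y (xp j))) x

/-- `b = sup_j sup_{x ∈ K_j} ∑_{e, i(e) = j} p_e(x)·d(w_e(x_{i(e)}), x_{t(e)})`. -/
def bConst (M : MarkovSystem K N E) (xp : N → K) : ℝ≥0∞ :=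
  ⨆ j : N, ⨆ x ∈ M.Kset j,
    ∑' e : {e : E // M.i e = j},
      ENNReal.ofReal (M.p e.val x * dist (M.w e.val (xp (M.i e.val))) (xp (M.t e.val)))

/-- `P^m_x` evaluated on a word: `p_{e_0}(x)·p_{e_1}(w_{e_0}x)·⋯`. -/
def wordProb (M : MarkovSystem K N E) : List (Option E) → K → ℝ
  | [], _ => 1
  | o :: rest, x => M.pext o x * M.wordProb rest (M.wext o x)

/-- `Λ = Φ(μ)`: `Λ` is a shift-invariant Borel probability measure with
`Λ(_m[e_m, …, e_n]) = ∫ P^m_x(_m[e_m, …, e_n]) dμ(x)` for all cylinders with `m ≤ 0`. -/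
def IsPhiOf (M : MarkovSystem K N E) (μ : Measure K) (Λ : Measure (CodeSpace E)) : Prop :=
  IsProbabilityMeasure Λ ∧ Measure.map (shiftMap E) Λ = Λ ∧
    ∀ m : ℤ, m ≤ 0 → ∀ es : List (Option E),
      Λ (cylSetL m es) = ∫⁻ x, ENNReal.ofReal (M.wordProb es x) ∂μ

/-- The (negative of the) energy function: `-u(σ) = -log p_{σ_1}(F(σ))` on `D`
(`+∞` if `p_{σ_1}(F(σ)) = 0`) and `+∞` off `D`, valued in `[0, ∞]`. -/
def negEnergy (M : MarkovSystem K N E) (j0 : N) (xp : N → K) (σ : CodeSpace E) : ℝ≥0∞ :=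
  if σ ∈ M.codeDomain j0 xp then
    (σ 1).elim ⊤ fun e =>
      if M.p e (M.code j0 xp σ) = 0 then ⊤
      else ENNReal.ofReal (-Real.log (M.p e (M.code j0 xp σ)))
  else ⊤

/-- The free energy `h_S(Λ) + ∫ u dΛ`, as an extended real number. -/
def freeEnergy (M : MarkovSystem K N E) (j0 : N) (xp : N → K)
    (Λ : Measure (CodeSpace E)) : EReal :=
  (entropyS Λ : EReal) - ((∫⁻ σ, M.negEnergy j0 xp σ ∂Λ : ℝ≥0∞) : EReal)

/-- `Λ₀ ∈ E(u)`: `Λ₀` is a thermodynamic equilibrium state for the energy function `u`. -/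
def IsEquilibriumForU (M : MarkovSystem K N E) (j0 : N) (xp : N → K)
    (Λ0 : Measure (CodeSpace E)) : Prop :=
  IsProbabilityMeasure Λ0 ∧ Measure.map (shiftMap E) Λ0 = Λ0 ∧ entropyS Λ0 ≠ ⊤ ∧
    M.freeEnergy j0 xp Λ0 =
      sSup {r : EReal | ∃ Λ : Measure (CodeSpace E),
        IsProbabilityMeasure Λ ∧ Measure.map (shiftMap E) Λ = Λ ∧ entropyS Λ ≠ ⊤ ∧
          r = M.freeEnergy j0 xp Λ}

end MarkovSystem

end

section CodeSpace

variable {E : Type*}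

instance : DiscreteMeasurableSpace (Option E) := ⟨fun _ => trivial⟩

theorem measurable_shiftMap : Measurable (shiftMap E) :=
  measurable_pi_lambda _ fun _ => measurable_pi_apply _

theorem measurableSet_cylSetL (m : ℤ) (es : List (Option E)) : MeasurableSet (cylSetL m es) := by
  simp only [cylSetL, Set.ofPred_forall]
  exact .iInter fun k => .iInter fun _ => measurable_pi_apply _ (measurableSet_singleton _)

theorem pastAlgebra_le : pastAlgebra E ≤ MeasurableSpace.pi := by
  refine MeasurableSpace.generateFrom_le ?_
  rintro _ ⟨es, -, rfl⟩
  exact measurableSet_cylSetL _ es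

theorem measurable_past_apply [Countable E] (n : ℕ) :
    Measurable[pastAlgebra E] fun σ : CodeSpace E => σ (-(n : ℤ)) := by
  refine @measurable_to_countable' _ _ _ _ (pastAlgebra E) _ fun o => ?_
  have h : (fun σ : CodeSpace E => σ (-(n : ℤ))) ⁻¹' {o} =
      ⋃ es : {es : List (Option E) // es.length = n + 1 ∧ es[0]? = some o},
        cylSetL (1 - (es.val.length : ℤ)) es.val := by
    ext σ
    simp only [Set.mem_preimage, Set.mem_singleton_iff, Set.mem_iUnion, Subtype.exists,
      exists_prop]
    constructor
    · intro hσ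
      refine ⟨List.ofFn fun k : Fin (n + 1) => σ (-(n : ℤ) + (k : ℕ)), ⟨by simp, ?_⟩, ?_⟩
      · simp [hσ]
      · intro k hk
        simp only [List.length_ofFn, List.get_ofFn, Fin.val_cast]
        congr 1
        push_cast
        ring
    · rintro ⟨es, ⟨hl, h0⟩, hσ⟩
      have hpos : 0 < es.length := by omega
      have := hσ 0 hpos
      rw [List.getElem?_eq_getElem hpos, Option.some_inj] at h0
      rw [List.get_eq_getElem, h0, hl] at this
      rw [← this]
      congr 1
      push_cast
      ring
  rw [h]
  refine @MeasurableSet.iUnion _ _ (pastAlgebra E) _ _ fun es => ?_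
  refine MeasurableSpace.measurableSet_generateFrom ⟨es.val, ?_, rfl⟩
  rintro h0
  simpa [h0] using es.prop.1

/-- A function of the code that depends only on finitely many coordinates `σ_{-n}, …, σ_0` is
strongly measurable with respect to the past. -/
theorem stronglyMeasurable_past_of_dependsOn [Countable E] {X : Type*} [TopologicalSpace X]
    {f : CodeSpace E → X} (n : ℕ)
    (hf : ∀ σ τ : CodeSpace E, (∀ k : ℕ, k ≤ n → σ (-(k : ℤ)) = τ (-(k : ℤ))) → f σ = f τ) :
    StronglyMeasurable[pastAlgebra E] f := by
  let r : CodeSpace E → Fin (n + 1) → Option E := fun σ k => σ (-((k : ℕ) : ℤ))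
  let s : (Fin (n + 1) → Option E) → CodeSpace E :=
    fun c k => if h : k.natAbs < n + 1 then c ⟨k.natAbs, h⟩ else none
  have hr : Measurable[pastAlgebra E] r :=
    @measurable_pi_lambda _ _ _ (pastAlgebra E) _ _ fun k => measurable_past_apply (k : ℕ)
  have hfr : f = fun σ => (f ∘ s) (r σ) := by
    funext σ
    refine hf _ _ fun k hk => ?_
    simp [s, r, Nat.not_lt.mpr hk]
  rw [hfr]
  exact (StronglyMeasurable.of_discrete (f := f ∘ s)).comp_measurable hr

end CodeSpace

namespace MarkovSystem

section Coding

variable {K : Type*} [MetricSpace K] [MeasurableSpace K] {N E : Type*} (M : MarkovSystem K N E)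
  (j0 : N) (xp : N → K)

theorem iterW_congr {σ τ : CodeSpace E} (n : ℕ)
    (h : ∀ k : ℕ, k ≤ n → σ (-(k : ℤ)) = τ (-(k : ℤ))) : M.iterW σ n = M.iterW τ n := by
  induction n with
  | zero => funext y; simpa [iterW] using congrArg (fun o => M.wext o y) (h 0 le_rfl)
  | succ n ih =>
    funext y
    have h1 := h (n + 1) le_rfl
    push_cast at h1
    simp only [iterW, h1, ih fun k hk => h k (by omega)]

theorem iterW_shiftMap (σ : CodeSpace E) (n : ℕ) (y : K) :
    M.iterW (shiftMap E σ) (n + 1) y = M.wext (σ 1) (M.iterW σ n y) := by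
  induction n generalizing y with
  | zero => simp [iterW, shiftMap]
  | succ n ih =>
    rw [iterW, ih, iterW]
    congr 4

theorem orbit_shiftMap (σ : CodeSpace E) (n : ℕ) :
    M.orbit j0 xp (shiftMap E σ) (n + 1) = M.wext (σ 1) (M.orbit j0 xp σ n) := by
  have h : shiftMap E σ (-((n + 1 : ℕ) : ℤ)) = σ (-(n : ℤ)) := by
    simp [shiftMap]
  rw [orbit, iterW_shiftMap, h, orbit]

theorem iterW_mem {σ : CodeSpace E} (hσ : σ ∈ M.pathSpace) (n : ℕ) {y : K} {e₀ e : E}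
    (h₀ : σ 0 = some e₀) (he : σ (-(n : ℤ)) = some e) (hy : y ∈ M.Kset (M.i e)) :
    M.iterW σ n y ∈ M.Kset (M.t e₀) := by
  induction n generalizing y e with
  | zero =>
    simp only [Nat.cast_zero, neg_zero, h₀, Option.some_inj] at he
    subst he
    simpa [iterW, h₀, wext] using M.w_mapsTo e₀ hy
  | succ n ih =>
    obtain ⟨a, b, ha, hb, hab⟩ := hσ (-((n + 1 : ℕ) : ℤ))
    rw [he, Option.some_inj] at ha
    subst ha
    rw [show -((n + 1 : ℕ) : ℤ) + 1 = -(n : ℤ) by push_cast; ring] at hb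
    refine ih hb ?_
    push_cast at he
    rw [he, hab]
    exact M.w_mapsTo e hy

variable {M j0 xp}

theorem orbit_mem (hxp : ∀ j, xp j ∈ M.Kset j) {σ : CodeSpace E} (hσ : σ ∈ M.pathSpace) (n : ℕ)
    {e₀ : E} (h₀ : σ 0 = some e₀) : M.orbit j0 xp σ n ∈ M.Kset (M.t e₀) := by
  obtain ⟨a, -, ha, -, -⟩ := hσ (-(n : ℤ))
  refine M.iterW_mem hσ n h₀ ha ?_
  simpa [ha, iext] using hxp _

theorem shiftMap_mem_pathSpace {σ : CodeSpace E} (hσ : σ ∈ M.pathSpace) :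
    shiftMap E σ ∈ M.pathSpace := fun n => hσ (n + 1)

theorem exists_transition {σ : CodeSpace E} (hσ : σ ∈ M.pathSpace) :
    ∃ e₀ e₁ : E, σ 0 = some e₀ ∧ σ 1 = some e₁ ∧ M.i e₁ = M.t e₀ := hσ 0

variable (M j0 xp)

/-- The limit of the backward orbit, as a function of the past of the code only. -/
noncomputable def pastCode (σ : CodeSpace E) : K :=
  if h : ∃ l : K, Tendsto (fun n : ℕ => M.orbit j0 xp σ n) atTop (𝓝 l) then h.choose else xp j0

/-- The codes `σ` whose past ends in a vertex `t(σ_0) = j`. -/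
def pastT (j : N) : Set (CodeSpace E) := {σ | ∃ e : E, σ 0 = some e ∧ M.t e = j}

/-- The codes whose coded point lies in the partition set prescribed by `σ_0`. -/
def interiorSet : Set (CodeSpace E) := ⋃ j, M.pastT j ∩ M.pastCode j0 xp ⁻¹' M.Kset j

theorem stronglyMeasurable_orbit [Countable E] (n : ℕ) :
    StronglyMeasurable[pastAlgebra E] fun σ => M.orbit j0 xp σ n := by
  refine stronglyMeasurable_past_of_dependsOn n fun σ τ h => ?_
  simp only [orbit, M.iterW_congr n h, h n le_rfl]

theorem measurableSet_pastT [Countable E] (j : N) : MeasurableSet[pastAlgebra E] (M.pastT j) := by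
  have h := measurable_past_apply (E := E) 0
  exact h (t := {o | ∃ e : E, o = some e ∧ M.t e = j}) .of_discrete

theorem measurableSet_exists_tendsto_orbit [CompleteSpace K] [Countable E] :
    MeasurableSet[pastAlgebra E]
    {σ : CodeSpace E | ∃ l : K, Tendsto (fun n : ℕ => M.orbit j0 xp σ n) atTop (𝓝 l)} := by
  have h : {σ : CodeSpace E | ∃ l : K, Tendsto (fun n : ℕ => M.orbit j0 xp σ n) atTop (𝓝 l)} =
      {σ | ∀ k : ℕ, ∃ n : ℕ, ∀ m : ℕ, n ≤ m →
        dist (M.orbit j0 xp σ m) (M.orbit j0 xp σ n) < 1 / ((k : ℝ) + 1)} := by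
    ext σ
    change (∃ l : K, _) ↔ ∀ k : ℕ, _
    refine Iff.trans ⟨fun ⟨_, hl⟩ => hl.cauchySeq, cauchySeq_tendsto_of_complete⟩ ?_
    rw [Metric.cauchySeq_iff']
    constructor
    · exact fun h k => h _ Nat.one_div_pos_of_nat
    · intro h ε hε
      obtain ⟨k, hk⟩ := exists_nat_one_div_lt hε
      obtain ⟨n, hn⟩ := h k
      exact ⟨n, fun m hm => (hn m hm).trans hk⟩
  rw [h]
  simp only [Set.ofPred_forall, Set.ofPred_exists]
  let _ := pastAlgebra E
  refine .iInter fun k => .iUnion fun n => .iInter fun m => .iInter fun _ => ?_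
  exact measurableSet_lt
    ((M.stronglyMeasurable_orbit j0 xp m).dist (M.stronglyMeasurable_orbit j0 xp n)).measurable
    measurable_const

theorem measurableSet_codeDomain [CompleteSpace K] [Countable E] :
    MeasurableSet (M.codeDomain j0 xp) := by
  have h : MeasurableSet M.pathSpace := by
    have : M.pathSpace = {σ : CodeSpace E | ∀ n : ℤ, (σ n, σ (n + 1)) ∈
        {o : Option E × Option E | ∃ e e', o.1 = some e ∧ o.2 = some e' ∧ M.i e' = M.t e}} := rfl
    rw [this]
    simp only [Set.ofPred_forall]
    exact .iInter fun n =>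
      ((measurable_pi_apply n).prodMk (measurable_pi_apply (n + 1))) .of_discrete
  exact h.inter (pastAlgebra_le _ (M.measurableSet_exists_tendsto_orbit j0 xp))

variable {M j0 xp}

theorem tendsto_orbit {σ : CodeSpace E} (hσ : σ ∈ M.codeDomain j0 xp) :
    Tendsto (fun n : ℕ => M.orbit j0 xp σ n) atTop (𝓝 (M.pastCode j0 xp σ)) := by
  rw [pastCode, dif_pos hσ.2]
  exact hσ.2.choose_spec

theorem code_eq_pastCode {σ : CodeSpace E} (hσ : σ ∈ M.codeDomain j0 xp) :
    M.code j0 xp σ = M.pastCode j0 xp σ := by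
  rw [code, dif_pos hσ, pastCode, dif_pos hσ.2]

theorem mem_Tset_iff {σ : CodeSpace E} (hσ : σ ∈ M.pathSpace) (j : N) :
    σ ∈ M.Tset j ↔ σ ∈ M.pastT j := ⟨fun h => h.2, fun h => ⟨hσ, h⟩⟩

theorem pastCode_mem_closure (hxp : ∀ j, xp j ∈ M.Kset j) {σ : CodeSpace E}
    (hσ : σ ∈ M.codeDomain j0 xp) {j : N} (hj : σ ∈ M.pastT j) :
    M.pastCode j0 xp σ ∈ closure (M.Kset j) := by
  obtain ⟨e, he, rfl⟩ := hj
  exact mem_closure_of_tendsto (tendsto_orbit hσ) (.of_forall fun n => orbit_mem hxp hσ.1 n he)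

theorem mem_interiorSet_iff {σ : CodeSpace E} {j : N} (hj : σ ∈ M.pastT j) :
    σ ∈ M.interiorSet j0 xp ↔ M.pastCode j0 xp σ ∈ M.Kset j := by
  obtain ⟨e, he, rfl⟩ := hj
  simp [interiorSet, pastT, he]

theorem mem_pastT_of_transition {σ : CodeSpace E} (hσ : σ ∈ M.pathSpace) {e : E}
    (he : σ 1 = some e) : σ ∈ M.pastT (M.i e) := by
  obtain ⟨e₀, e₁, h₀, h₁, h⟩ := exists_transition hσ
  rw [he, Option.some_inj] at h₁
  exact ⟨e₀, h₀, by rw [h₁, h]⟩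

theorem tendsto_orbit_shiftMap (hxp : ∀ j, xp j ∈ M.Kset j) {wb : E → K → K}
    (hwb : M.IsUCExtensionW wb) {σ : CodeSpace E}
    (hσ : σ ∈ M.codeDomain j0 xp) {e : E} (he : σ 1 = some e) :
    Tendsto (fun n : ℕ => M.orbit j0 xp (shiftMap E σ) n) atTop
      (𝓝 (wb e (M.pastCode j0 xp σ))) := by
  have hT := mem_pastT_of_transition hσ.1 he
  have hmem : ∀ n, M.orbit j0 xp σ n ∈ M.Kset (M.i e) := by
    obtain ⟨e₀, h₀, h⟩ := hT
    exact fun n => h ▸ orbit_mem hxp hσ.1 n h₀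
  rw [← tendsto_add_atTop_iff_nat 1]
  have hc := (hwb e).1 _ (pastCode_mem_closure hxp hσ hT)
  refine (hc.tendsto.comp (tendsto_nhdsWithin_iff.2 ⟨tendsto_orbit hσ,
    .of_forall fun n => subset_closure (hmem n)⟩)).congr fun n => ?_
  rw [orbit_shiftMap, he, Function.comp_apply, (hwb e).2 _ (hmem n)]
  rfl

theorem shiftMap_mem_codeDomain (hxp : ∀ j, xp j ∈ M.Kset j) {wb : E → K → K}
    (hwb : M.IsUCExtensionW wb) {σ : CodeSpace E} (hσ : σ ∈ M.codeDomain j0 xp) :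
    shiftMap E σ ∈ M.codeDomain j0 xp := by
  obtain ⟨-, e, -, he, -⟩ := exists_transition hσ.1
  exact ⟨shiftMap_mem_pathSpace hσ.1, _, tendsto_orbit_shiftMap hxp hwb hσ he⟩

theorem pastCode_shiftMap (hxp : ∀ j, xp j ∈ M.Kset j) {wb : E → K → K}
    (hwb : M.IsUCExtensionW wb) {σ : CodeSpace E}
    (hσ : σ ∈ M.codeDomain j0 xp) {e : E} (he : σ 1 = some e) :
    M.pastCode j0 xp (shiftMap E σ) = wb e (M.pastCode j0 xp σ) :=
  tendsto_nhds_unique (tendsto_orbit (shiftMap_mem_codeDomain hxp hwb hσ))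
    (tendsto_orbit_shiftMap hxp hwb hσ he)

theorem shiftMap_mem_interiorSet (hxp : ∀ j, xp j ∈ M.Kset j) {wb : E → K → K}
    (hwb : M.IsUCExtensionW wb) {σ : CodeSpace E}
    (hσ : σ ∈ M.codeDomain j0 xp) (h : σ ∈ M.interiorSet j0 xp) :
    shiftMap E σ ∈ M.interiorSet j0 xp := by
  obtain ⟨-, e, -, he, -⟩ := exists_transition hσ.1
  have hT : shiftMap E σ ∈ M.pastT (M.t e) := ⟨e, by simpa [shiftMap] using he, rfl⟩
  have hK := (mem_interiorSet_iff (mem_pastT_of_transition hσ.1 he)).1 h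
  rw [mem_interiorSet_iff hT, pastCode_shiftMap hxp hwb hσ he, (hwb e).2 _ hK]
  exact M.w_mapsTo e hK

end Coding

section CodingMeasurability

variable {K : Type*} [MetricSpace K] [CompleteSpace K] [MeasurableSpace K] [BorelSpace K]
  {N E : Type*} [Countable E] (M : MarkovSystem K N E) (j0 : N) (xp : N → K)

theorem measurable_pastCode : Measurable[pastAlgebra E] (M.pastCode j0 xp) := by
  let P := {σ : CodeSpace E | ∃ l : K, Tendsto (fun n : ℕ => M.orbit j0 xp σ n) atTop (𝓝 l)}
  let _ := pastAlgebra E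
  refine measurable_of_tendsto_metrizable (f := fun n σ => if σ ∈ P then M.orbit j0 xp σ n
    else xp j0) (fun n => ?_) ?_
  · exact Measurable.ite (M.measurableSet_exists_tendsto_orbit j0 xp)
      (M.stronglyMeasurable_orbit j0 xp n).measurable measurable_const
  · rw [tendsto_pi_nhds]
    intro σ
    by_cases h : σ ∈ P
    · simp only [h, if_true]
      rw [pastCode, dif_pos (show ∃ l : K, _ from h)]
      exact Exists.choose_spec h
    · simp only [h, if_false]
      rw [pastCode, dif_neg (show ¬ ∃ l : K, _ from h)]
      exact tendsto_const_nhds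

theorem measurableSet_interiorSet [Countable N] :
    MeasurableSet[pastAlgebra E] (M.interiorSet j0 xp) :=
  @MeasurableSet.iUnion _ _ (pastAlgebra E) _ _ fun j =>
    @MeasurableSet.inter _ (pastAlgebra E) _ _ (M.measurableSet_pastT j)
      (M.measurable_pastCode j0 xp (M.Kset_measurable j))

end CodingMeasurability

section States

variable {K : Type*} [MetricSpace K] [MeasurableSpace K] {N E : Type*} (M : MarkovSystem K N E)
  (j0 : N) (xp : N → K)

/-- The density of the transition along `e`, given the past, prescribed by the weights `q`. -/
noncomputable def transDensity (q : E → K → ℝ) (e : E) : CodeSpace E → ℝ≥0∞ :=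
  (M.pastT (M.i e)).indicator fun σ => ENNReal.ofReal (q e (M.pastCode j0 xp σ))

/-- `Λ` is a shift-invariant probability measure carried by the domain of the coding map whose
transition probabilities given the past have densities `transDensity q`. -/
structure IsState (q : E → K → ℝ) (Λ : Measure (CodeSpace E)) : Prop where
  isProbabilityMeasure : IsProbabilityMeasure Λ
  measurePreserving : MeasurePreserving (shiftMap E) Λ Λ
  ae_mem_codeDomain : ∀ᵐ σ ∂Λ, σ ∈ M.codeDomain j0 xp
  measure_inter : ∀ (e : E) (A : Set (CodeSpace E)), MeasurableSet[pastAlgebra E] A →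
    Λ (A ∩ {σ | σ 1 = some e}) = ∫⁻ σ in A, M.transDensity j0 xp q e σ ∂Λ

theorem measurableSet_next (e : E) : MeasurableSet {σ : CodeSpace E | σ 1 = some e} :=
  have h : Measurable fun σ : CodeSpace E => σ 1 := measurable_pi_apply 1
  h (measurableSet_singleton (some e))

variable {M j0 xp}

theorem ae_eq_tsum_next [Countable E] {Λ : Measure (CodeSpace E)}
    (h : ∀ᵐ σ ∂Λ, σ ∈ M.codeDomain j0 xp) (f : CodeSpace E → ℝ≥0∞) :
    ∀ᵐ σ ∂Λ, f σ = ∑' e : E, {σ : CodeSpace E | σ 1 = some e}.indicator f σ := by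
  filter_upwards [h] with σ hσ
  obtain ⟨-, e, -, he, -⟩ := exists_transition hσ.1
  rw [tsum_eq_single e]
  · simp [he]
  · intro e' hne
    refine Set.indicator_of_notMem ?_ _
    simpa [he] using hne.symm

theorem lintegral_eq_tsum_next [Countable E] {Λ : Measure (CodeSpace E)}
    (h : ∀ᵐ σ ∂Λ, σ ∈ M.codeDomain j0 xp) {f : CodeSpace E → ℝ≥0∞} (hf : Measurable f) :
    ∫⁻ σ, f σ ∂Λ = ∑' e : E, ∫⁻ σ in {σ : CodeSpace E | σ 1 = some e}, f σ ∂Λ := by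
  rw [lintegral_congr_ae (ae_eq_tsum_next h f),
    lintegral_tsum fun e => (hf.indicator (measurableSet_next e)).aemeasurable]
  simp only [lintegral_indicator (measurableSet_next _)]

theorem map_code_eq_map_pastCode {Λ : Measure (CodeSpace E)}
    (h : ∀ᵐ σ ∂Λ, σ ∈ M.codeDomain j0 xp) :
    Measure.map (M.code j0 xp) Λ = Measure.map (M.pastCode j0 xp) Λ :=
  Measure.map_congr (h.mono fun _ hσ => code_eq_pastCode hσ)

variable {q : E → K → ℝ} {Λ : Measure (CodeSpace E)}

theorem indicator_Tset_eq {σ : CodeSpace E} (hq0 : ∀ e x, 0 ≤ q e x)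
    (hσ : σ ∈ M.codeDomain j0 xp) (e : E) :
    (M.Tset (M.i e)).indicator (fun σ => q e (M.code j0 xp σ)) σ =
      (M.transDensity j0 xp q e σ).toReal := by
  by_cases h : σ ∈ M.pastT (M.i e)
  · rw [Set.indicator_of_mem ((mem_Tset_iff hσ.1 _).2 h), transDensity, Set.indicator_of_mem h,
      ENNReal.toReal_ofReal (hq0 _ _), code_eq_pastCode hσ]
  · rw [Set.indicator_of_notMem (mt (mem_Tset_iff hσ.1 _).1 h), transDensity,
      Set.indicator_of_notMem h, ENNReal.toReal_zero]

theorem transDensity_ne_top (e : E) (σ : CodeSpace E) : M.transDensity j0 xp q e σ ≠ ∞ := by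
  by_cases h : σ ∈ M.pastT (M.i e) <;> simp [transDensity, h]

namespace IsState

theorem cond (h : M.IsState j0 xp q Λ) {A : Set (CodeSpace E)}
    (hA : MeasurableSet[pastAlgebra E] A) (hinv : shiftMap E ⁻¹' A =ᵐ[Λ] A) (hne : Λ A ≠ 0) :
    M.IsState j0 xp q (ProbabilityTheory.cond Λ A) := by
  have := h.isProbabilityMeasure
  have hA' := pastAlgebra_le _ hA
  refine ⟨ProbabilityTheory.cond_isProbabilityMeasure hne, ⟨measurable_shiftMap, ?_⟩,
    ProbabilityTheory.cond_absolutelyContinuous h.ae_mem_codeDomain, fun e B hB => ?_⟩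
  · rw [ProbabilityTheory.cond, Measure.map_smul, ← Measure.restrict_congr_set hinv,
      ← Measure.restrict_map measurable_shiftMap hA', h.measurePreserving.map_eq,
      Measure.restrict_congr_set hinv]
  · have hB' := pastAlgebra_le _ hB
    rw [ProbabilityTheory.cond, Measure.restrict_smul, lintegral_smul_measure,
      Measure.restrict_restrict hB', ← h.measure_inter e _ (hB.inter hA), Measure.smul_apply,
      Measure.restrict_apply (hB'.inter (measurableSet_next e)), Set.inter_right_comm]

theorem congr {q' : E → K → ℝ} (h : M.IsState j0 xp q Λ)
    (hqq : ∀ e, M.transDensity j0 xp q e =ᵐ[Λ] M.transDensity j0 xp q' e) :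
    M.IsState j0 xp q' Λ where
  isProbabilityMeasure := h.isProbabilityMeasure
  measurePreserving := h.measurePreserving
  ae_mem_codeDomain := h.ae_mem_codeDomain
  measure_inter e A hA := by
    rw [h.measure_inter e A hA]
    exact lintegral_congr_ae (ae_restrict_of_ae (hqq e))

end IsState

end States

section MarkovOperator

variable {K : Type*} [MetricSpace K] [MeasurableSpace K] {N E : Type*} (M : MarkovSystem K N E)

theorem measurable_p_mul {f : K → ℝ≥0∞} (hf : Measurable f) (e : E) :
    Measurable fun x => ENNReal.ofReal (M.p e x) * f (M.w e x) :=
  (M.p_measurable e).ennreal_ofReal.mul (hf.comp (M.w_measurable e))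

theorem measurable_markovOp [Countable E] {f : K → ℝ≥0∞} (hf : Measurable f) :
    Measurable (M.markovOp f) :=
  Measurable.tsum (M.measurable_p_mul hf)

theorem adjOp_apply (ν : Measure K) {B : Set K} (hB : MeasurableSet B) :
    M.adjOp ν B = ∑' e : E, ∫⁻ x, ENNReal.ofReal (M.p e x) * B.indicator 1 (M.w e x) ∂ν := by
  rw [adjOp, Measure.sum_apply _ hB]
  congr 1
  funext e
  have hB' := M.w_measurable e hB
  rw [Measure.map_apply (M.w_measurable e) hB, withDensity_apply _ hB', ← lintegral_indicator hB']
  congr 1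
  funext x
  by_cases hx : M.w e x ∈ B <;> simp [hx, Set.indicator]

theorem adjOp_apply_eq_lintegral [Countable E] (ν : Measure K) {B : Set K} (hB : MeasurableSet B) :
    M.adjOp ν B = ∫⁻ x, M.markovOp (B.indicator 1) x ∂ν := by
  rw [adjOp_apply M ν hB]
  simp only [markovOp]
  exact (lintegral_tsum fun e =>
    (M.measurable_p_mul (measurable_one.indicator hB) e).aemeasurable).symm

theorem adjOp_add (ν₁ ν₂ : Measure K) : M.adjOp (ν₁ + ν₂) = M.adjOp ν₁ + M.adjOp ν₂ := by
  ext B hB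
  simp only [Measure.add_apply, adjOp_apply M _ hB, lintegral_add_measure, ENNReal.tsum_add]

theorem adjOp_smul (c : ℝ≥0∞) (ν : Measure K) : M.adjOp (c • ν) = c • M.adjOp ν := by
  ext B hB
  simp only [Measure.smul_apply, adjOp_apply M _ hB, lintegral_smul_measure, smul_eq_mul,
    ENNReal.tsum_mul_left]

theorem tsum_ofReal_p (x : K) : ∑' e : E, ENNReal.ofReal (M.p e x) = 1 := by
  obtain ⟨j, hj⟩ := Set.mem_iUnion.1 (M.Kset_cover.symm ▸ Set.mem_univ x)
  have h1 := M.p_tsum_one j x hj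
  have hs : Summable fun e : {e : E // M.i e = j} => M.p e.val x := by
    by_contra h
    rw [tsum_eq_zero_of_not_summable h] at h1
    exact zero_ne_one h1
  have h2 : ∑' e : {e : E // M.i e = j}, ENNReal.ofReal (M.p e.val x) = 1 := by
    rw [← ENNReal.ofReal_tsum_of_nonneg (fun e => M.p_nonneg _ _) hs, h1, ENNReal.ofReal_one]
  rw [← h2]
  refine (tsum_subtype_eq_of_support_subset (s := {e : E | M.i e = j})
    (f := fun e => ENNReal.ofReal (M.p e x)) fun e he => ?_).symm
  by_contra hne
  refine he ?_
  have hx : x ∉ M.Kset (M.i e) := fun hx =>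
    Set.disjoint_left.1 (M.Kset_disjoint hne) hx hj
  simp [M.p_zero_outside e x hx]

theorem adjOp_univ [Countable E] (ν : Measure K) : M.adjOp ν Set.univ = ν Set.univ := by
  rw [adjOp_apply_eq_lintegral M ν .univ]
  simp [markovOp, tsum_ofReal_p]

theorem mem_Kset_unique {x : K} {j j' : N} (h : x ∈ M.Kset j) (h' : x ∈ M.Kset j') : j = j' := by
  by_contra hne
  exact Set.disjoint_left.1 (M.Kset_disjoint hne) h h'

end MarkovOperator

section Extensions

variable {K : Type*} [MetricSpace K] [MeasurableSpace K] {N E : Type*} {M : MarkovSystem K N E}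
  {pbar : E → K → ℝ} {wb : E → K → K}

theorem IsUCExtensionP.nonneg (h : M.IsUCExtensionP pbar) (e : E) (x : K) : 0 ≤ pbar e x := by
  by_cases hx : x ∈ closure (M.Kset (M.i e))
  · have := mem_closure_iff_nhdsWithin_neBot.1 hx
    refine ge_of_tendsto (((h e).1 x hx).mono subset_closure) ?_
    filter_upwards [self_mem_nhdsWithin] with y hy
    rw [(h e).2.1 y hy]
    exact M.p_nonneg e y
  · rw [(h e).2.2 x hx]

theorem dp_nonneg (h : M.IsUCExtensionP pbar) (e : E) (x : K) : 0 ≤ M.dp pbar e x :=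
  Set.indicator_nonneg (fun x _ => h.nonneg e x) x

variable [BorelSpace K]

theorem IsUCExtensionP.measurable (h : M.IsUCExtensionP pbar) (e : E) : Measurable (pbar e) := by
  have : pbar e = (closure (M.Kset (M.i e))).piecewise (pbar e) 0 := by
    funext x
    by_cases hx : x ∈ closure (M.Kset (M.i e))
    · simp [hx]
    · simp [hx, (h e).2.2 x hx]
  rw [this]
  exact (h e).1.measurable_piecewise continuousOn_const isClosed_closure.measurableSet

theorem measurable_dp (h : M.IsUCExtensionP pbar) (e : E) : Measurable (M.dp pbar e) :=
  (h.measurable e).indicator (isClosed_closure.measurableSet.diff (M.Kset_measurable _))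

theorem measurable_Rop [Countable E] (h : M.IsUCExtensionP pbar) (hw : ∀ e, Measurable (wb e))
    {f : K → ℝ≥0∞} (hf : Measurable f) : Measurable (M.Rop pbar wb f) :=
  Measurable.tsum fun e => (measurable_dp h e).ennreal_ofReal.mul (hf.comp (hw e))

theorem measurable_Rop_iterate [Countable E] (h : M.IsUCExtensionP pbar)
    (hw : ∀ e, Measurable (wb e)) (n : ℕ) : Measurable ((M.Rop pbar wb)^[n] fun _ => 1) := by
  induction n with
  | zero => exact measurable_const
  | succ n ih =>
    rw [Function.iterate_succ_apply']
    exact measurable_Rop h hw ih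

theorem exists_measurable_extension (x₀ : K) (h : M.IsUCExtensionW wb) (pbar : E → K → ℝ) :
    ∃ wm : E → K → K, M.IsUCExtensionW wm ∧ (∀ e, Measurable (wm e)) ∧
      M.Rop pbar wm = M.Rop pbar wb := by
  refine ⟨fun e => (closure (M.Kset (M.i e))).piecewise (wb e) fun _ => x₀, fun e => ⟨?_, ?_⟩,
    fun e => ?_, ?_⟩
  · exact (h e).1.congr fun x hx => by simp [hx]
  · intro x hx
    rw [← (h e).2 x hx]
    simp [subset_closure hx]
  · exact (h e).1.measurable_piecewise continuousOn_const isClosed_closure.measurableSet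
  · funext f x
    refine tsum_congr fun e => ?_
    by_cases hx : x ∈ closure (M.Kset (M.i e))
    · simp [hx]
    · simp [dp, hx]

end Extensions

section StateProperties

variable {K : Type*} [MetricSpace K] [CompleteSpace K] [MeasurableSpace K] [BorelSpace K]
  {N E : Type*} [Countable E] {M : MarkovSystem K N E} {j0 : N} {xp : N → K}
  {q : E → K → ℝ} {Λ : Measure (CodeSpace E)}

theorem measurable_transDensity (hq : ∀ e, Measurable (q e)) (e : E) :
    Measurable[pastAlgebra E] (M.transDensity j0 xp q e) :=
  let _ := pastAlgebra E
  (((hq e).comp (M.measurable_pastCode j0 xp)).ennreal_ofReal).indicator (M.measurableSet_pastT _)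

theorem measurable_transDensity_mul (hq : ∀ e, Measurable (q e)) {wb : E → K → K}
    (hw : ∀ e, Measurable (wb e)) {g : K → ℝ≥0∞} (hg : Measurable g) (e : E) :
    Measurable fun σ => M.transDensity j0 xp q e σ * g (wb e (M.pastCode j0 xp σ)) :=
  ((measurable_transDensity hq e).mono pastAlgebra_le le_rfl).mul
    (hg.comp ((hw e).comp ((M.measurable_pastCode j0 xp).mono pastAlgebra_le le_rfl)))

theorem isAsymptotic_iff_isState (hq : ∀ e, Measurable (q e)) (hq0 : ∀ e x, 0 ≤ q e x) :
    M.IsAsymptotic j0 xp q Λ ↔ M.IsState j0 xp q Λ := by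
  have hm := measurable_transDensity (M := M) (j0 := j0) (xp := xp) hq
  have hset := measurableSet_next (E := E)
  have hdens : ∀ (e : E) (A : Set (CodeSpace E)),
      ∫⁻ σ in A, M.transDensity j0 xp q e σ ∂Λ =
        ∫⁻ σ in A, ENNReal.ofReal (M.transDensity j0 xp q e σ).toReal ∂Λ := fun e A => by
    simp only [ENNReal.ofReal_toReal (transDensity_ne_top _ _)]
  have hnn : ∀ e, ∀ᵐ σ ∂Λ, 0 ≤ (M.transDensity j0 xp q e σ).toReal := fun e =>
    .of_forall fun σ => ENNReal.toReal_nonneg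
  constructor
  · rintro ⟨hP, hS, hD, hT⟩
    have hD' : ∀ᵐ σ ∂Λ, σ ∈ M.codeDomain j0 xp :=
      (mem_ae_iff_prob_eq_one (M.measurableSet_codeDomain j0 xp)).2 hD
    refine ⟨hP, ⟨measurable_shiftMap, hS⟩, hD', fun e A hA => ?_⟩
    have hce : Λ[{σ : CodeSpace E | σ 1 = some e}.indicator (fun _ => (1 : ℝ)) | pastAlgebra E]
        =ᵐ[Λ] fun σ => (M.transDensity j0 xp q e σ).toReal := by
      filter_upwards [hT e, hD'] with σ h1 h2
      rw [h1, indicator_Tset_eq hq0 h2]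
    have hint : Integrable ({σ : CodeSpace E | σ 1 = some e}.indicator fun _ => (1 : ℝ)) Λ :=
      (integrable_const _).indicator (hset e)
    have hI : Integrable (fun σ => (M.transDensity j0 xp q e σ).toReal) Λ :=
      integrable_condExp.congr hce
    have hA' := pastAlgebra_le _ hA
    rw [hdens, ← ofReal_integral_eq_lintegral_ofReal hI.integrableOn (ae_restrict_of_ae (hnn e)),
      ← setIntegral_congr_ae hA' (hce.mono fun σ h _ => h),
      setIntegral_condExp pastAlgebra_le hint hA, setIntegral_indicator (hset e),
      setIntegral_const, smul_eq_mul, mul_one, ofReal_measureReal]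
  · rintro ⟨hP, hS, hD, hT⟩
    refine ⟨hP, hS.map_eq, (mem_ae_iff_prob_eq_one (M.measurableSet_codeDomain j0 xp)).1 hD,
      fun e => ?_⟩
    have hint : Integrable ({σ : CodeSpace E | σ 1 = some e}.indicator fun _ => (1 : ℝ)) Λ :=
      (integrable_const _).indicator (hset e)
    have hmr : Measurable[pastAlgebra E] fun σ => (M.transDensity j0 xp q e σ).toReal :=
      ENNReal.measurable_toReal.comp (hm e)
    have hI : Integrable (fun σ => (M.transDensity j0 xp q e σ).toReal) Λ := by
      refine integrable_toReal_of_lintegral_ne_top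
        ((hm e).mono pastAlgebra_le le_rfl).aemeasurable ?_
      rw [← setLIntegral_univ, ← hT e _ .univ]
      exact measure_ne_top _ _
    have hce : (fun σ => (M.transDensity j0 xp q e σ).toReal) =ᵐ[Λ]
        Λ[{σ : CodeSpace E | σ 1 = some e}.indicator (fun _ => (1 : ℝ)) | pastAlgebra E] := by
      refine ae_eq_condExp_of_forall_setIntegral_eq pastAlgebra_le hint
        (fun _ _ _ => hI.integrableOn) (fun A hA _ => ?_)
        hmr.stronglyMeasurable.aestronglyMeasurable
      rw [integral_eq_lintegral_of_nonneg_ae (ae_restrict_of_ae (hnn e))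
        hI.aestronglyMeasurable.restrict, ← hdens, ← hT e A hA, setIntegral_indicator (hset e),
        setIntegral_const, smul_eq_mul, mul_one, Measure.real]
    filter_upwards [hce, hD] with σ h1 h2
    rw [← h1, indicator_Tset_eq hq0 h2]

namespace IsState

theorem isInvariantMeasure_map_code_iff (h : M.IsState j0 xp q Λ) :
    M.IsInvariantMeasure (Measure.map (M.code j0 xp) Λ) ↔
      M.adjOp (Measure.map (M.pastCode j0 xp) Λ) = Measure.map (M.pastCode j0 xp) Λ := by
  have := h.isProbabilityMeasure
  rw [map_code_eq_map_pastCode h.ae_mem_codeDomain]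
  exact and_iff_right (Measure.isProbabilityMeasure_map
    ((M.measurable_pastCode j0 xp).mono pastAlgebra_le le_rfl).aemeasurable)

theorem lintegral_next (h : M.IsState j0 xp q Λ) (hq : ∀ e, Measurable (q e)) (e : E)
    {f : CodeSpace E → ℝ≥0∞} (hf : Measurable[pastAlgebra E] f) :
    ∫⁻ σ in {σ : CodeSpace E | σ 1 = some e}, f σ ∂Λ =
      ∫⁻ σ, M.transDensity j0 xp q e σ * f σ ∂Λ := by
  have hm := (measurable_transDensity (M := M) (j0 := j0) (xp := xp) hq e).mono pastAlgebra_le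
    le_rfl
  refine Eq.trans ?_ (lintegral_withDensity_eq_lintegral_mul _ hm (hf.mono pastAlgebra_le le_rfl))
  rw [← lintegral_trim pastAlgebra_le hf, ← lintegral_trim pastAlgebra_le hf]
  congr 1
  refine @Measure.ext _ (pastAlgebra E) _ _ fun A hA => ?_
  rw [trim_measurableSet_eq _ hA, trim_measurableSet_eq _ hA,
    Measure.restrict_apply (pastAlgebra_le _ hA), withDensity_apply _ (pastAlgebra_le _ hA),
    h.measure_inter e A hA]

/-- One step of the dynamics, on a past-measurable set that is invariant modulo null sets. -/
theorem setLIntegral_pastCode (h : M.IsState j0 xp q Λ) (hq : ∀ e, Measurable (q e))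
    (hxp : ∀ j, xp j ∈ M.Kset j) {wb : E → K → K} (hwb : M.IsUCExtensionW wb)
    (hw : ∀ e, Measurable (wb e)) {A : Set (CodeSpace E)} (hA : MeasurableSet[pastAlgebra E] A)
    (hinv : shiftMap E ⁻¹' A =ᵐ[Λ] A) {g : K → ℝ≥0∞} (hg : Measurable g) :
    ∫⁻ σ in A, g (M.pastCode j0 xp σ) ∂Λ =
      ∑' e : E, ∫⁻ σ in A,
        M.transDensity j0 xp q e σ * g (wb e (M.pastCode j0 xp σ)) ∂Λ := by
  have hF := M.measurable_pastCode j0 xp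
  have hF' := hF.mono pastAlgebra_le le_rfl
  have hA' := pastAlgebra_le _ hA
  have hD : ∀ᵐ σ ∂Λ.restrict A, σ ∈ M.codeDomain j0 xp := ae_restrict_of_ae h.ae_mem_codeDomain
  change ∫⁻ σ in A, (g ∘ M.pastCode j0 xp) σ ∂Λ = _
  rw [← h.measurePreserving.setLIntegral_comp_preimage hA' (hg.comp hF'),
    setLIntegral_congr hinv,
    lintegral_eq_tsum_next hD (f := fun σ => (g ∘ M.pastCode j0 xp) (shiftMap E σ))
      ((hg.comp hF').comp measurable_shiftMap)]
  refine tsum_congr fun e => ?_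
  have hf : Measurable[pastAlgebra E] (A.indicator fun σ => g (wb e (M.pastCode j0 xp σ))) :=
    (hg.comp ((hw e).comp hF)).indicator hA
  have h1 := h.lintegral_next hq e hf
  rw [lintegral_indicator hA', Measure.restrict_restrict hA'] at h1
  rw [Measure.restrict_restrict (measurableSet_next e), Set.inter_comm]
  have h2 : ∫⁻ σ, M.transDensity j0 xp q e σ *
      A.indicator (fun σ => g (wb e (M.pastCode j0 xp σ))) σ ∂Λ =
      ∫⁻ σ in A, M.transDensity j0 xp q e σ * g (wb e (M.pastCode j0 xp σ)) ∂Λ := by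
    rw [← lintegral_indicator hA']
    congr 1
    funext σ
    by_cases hσ : σ ∈ A <;> simp [hσ]
  rw [← h2, ← h1]
  refine setLIntegral_congr_fun_ae (hA'.inter (measurableSet_next e)) ?_
  filter_upwards [h.ae_mem_codeDomain] with σ hσ hσA
  simp only [Function.comp_apply, pastCode_shiftMap hxp hwb hσ hσA.2]

theorem ae_tsum_transDensity (h : M.IsState j0 xp q Λ) (hq : ∀ e, Measurable (q e)) :
    ∀ᵐ σ ∂Λ, ∑' e : E, M.transDensity j0 xp q e σ = 1 := by
  have := h.isProbabilityMeasure
  have hm := measurable_transDensity (M := M) (j0 := j0) (xp := xp) hq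
  have hsum : Measurable[pastAlgebra E] fun σ => ∑' e : E, M.transDensity j0 xp q e σ :=
    let _ := pastAlgebra E
    Measurable.tsum hm
  refine ae_of_ae_trim pastAlgebra_le (ae_eq_of_forall_setLIntegral_eq_of_sigmaFinite
    (g := fun _ => 1) hsum measurable_const fun A hA _ => ?_)
  have hA' := pastAlgebra_le _ hA
  rw [restrict_trim pastAlgebra_le _ hA, lintegral_trim pastAlgebra_le hsum,
    lintegral_trim pastAlgebra_le measurable_const,
    lintegral_tsum fun e => ((hm e).mono pastAlgebra_le le_rfl).aemeasurable,
    lintegral_eq_tsum_next (ae_restrict_of_ae h.ae_mem_codeDomain) measurable_const]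
  refine tsum_congr fun e => ?_
  rw [← h.measure_inter e A hA, setLIntegral_one, Measure.restrict_apply (measurableSet_next e),
    Set.inter_comm]

end IsState

end StateProperties

section Consistency

variable {K : Type*} [MetricSpace K] [MeasurableSpace K] {N E : Type*} {M : MarkovSystem K N E}
  {j0 : N} {xp : N → K} {pbar : E → K → ℝ}

theorem transDensity_dp_of_mem {σ : CodeSpace E} (h : σ ∈ M.interiorSet j0 xp) (e : E) :
    M.transDensity j0 xp (M.dp pbar) e σ = 0 := by
  by_cases hT : σ ∈ M.pastT (M.i e)
  · have hK := (mem_interiorSet_iff hT).1 h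
    simp [transDensity, dp, hK]
  · rw [transDensity, Set.indicator_of_notMem hT]

theorem transDensity_dp_of_notMem (hxp : ∀ j, xp j ∈ M.Kset j) {σ : CodeSpace E}
    (hσ : σ ∈ M.codeDomain j0 xp) (h : σ ∉ M.interiorSet j0 xp) (e : E) :
    M.transDensity j0 xp (M.dp pbar) e σ = M.transDensity j0 xp pbar e σ := by
  by_cases hT : σ ∈ M.pastT (M.i e)
  · have hK : M.pastCode j0 xp σ ∈ closure (M.Kset (M.i e)) \ M.Kset (M.i e) :=
      ⟨pastCode_mem_closure hxp hσ hT, mt (mem_interiorSet_iff hT).2 h⟩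
    rw [transDensity, transDensity, Set.indicator_of_mem hT, Set.indicator_of_mem hT, dp,
      Set.indicator_of_mem hK]
  · rw [transDensity, transDensity, Set.indicator_of_notMem hT, Set.indicator_of_notMem hT]

theorem transDensity_mul_of_mem {wb : E → K → K} (hpbar : M.IsUCExtensionP pbar)
    (hwb : M.IsUCExtensionW wb) {σ : CodeSpace E} (h : σ ∈ M.interiorSet j0 xp) (e : E)
    (g : K → ℝ≥0∞) :
    M.transDensity j0 xp pbar e σ * g (wb e (M.pastCode j0 xp σ)) =
      ENNReal.ofReal (M.p e (M.pastCode j0 xp σ)) * g (M.w e (M.pastCode j0 xp σ)) := by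
  by_cases hT : σ ∈ M.pastT (M.i e)
  · have hK := (mem_interiorSet_iff hT).1 h
    rw [transDensity, Set.indicator_of_mem hT, (hpbar e).2.1 _ hK, (hwb e).2 _ hK]
  · obtain ⟨j, hj, hjK⟩ := Set.mem_iUnion.1 h
    have hK : M.pastCode j0 xp σ ∉ M.Kset (M.i e) := fun hK =>
      hT (M.mem_Kset_unique hjK hK ▸ hj)
    rw [transDensity, Set.indicator_of_notMem hT, M.p_zero_outside e _ hK, ENNReal.ofReal_zero,
      zero_mul, zero_mul]

namespace IsState

variable [CompleteSpace K] [BorelSpace K] [Countable E] {q : E → K → ℝ} {wb : E → K → K}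
  {Λ : Measure (CodeSpace E)}

theorem map_pastCode_apply (h : M.IsState j0 xp q Λ) (hq : ∀ e, Measurable (q e))
    (hxp : ∀ j, xp j ∈ M.Kset j) (hwb : M.IsUCExtensionW wb)
    (hw : ∀ e, Measurable (wb e)) {A : Set (CodeSpace E)} (hA : MeasurableSet[pastAlgebra E] A)
    (hinv : shiftMap E ⁻¹' A =ᵐ[Λ] A) {B : Set K} (hB : MeasurableSet B) :
    Measure.map (M.pastCode j0 xp) (Λ.restrict A) B =
      ∑' e : E, ∫⁻ σ in A, M.transDensity j0 xp q e σ *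
        B.indicator 1 (wb e (M.pastCode j0 xp σ)) ∂Λ := by
  have hg : Measurable (B.indicator 1 : K → ℝ≥0∞) := measurable_one.indicator hB
  rw [← h.setLIntegral_pastCode hq hxp hwb hw hA hinv hg,
    ← lintegral_map hg ((M.measurable_pastCode j0 xp).mono pastAlgebra_le le_rfl),
    lintegral_indicator_one hB]

theorem ae_one_le_iterate_Rop (h : M.IsState j0 xp (M.dp pbar) Λ) (hpbar : M.IsUCExtensionP pbar)
    (hxp : ∀ j, xp j ∈ M.Kset j) (hwb : M.IsUCExtensionW wb) (hw : ∀ e, Measurable (wb e))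
    (n : ℕ) :
    ∀ᵐ σ ∂Λ, 1 ≤ (M.Rop pbar wb)^[n] (fun _ => 1) (M.pastCode j0 xp σ) := by
  induction n with
  | zero => exact .of_forall fun _ => le_rfl
  | succ n ih =>
    set f := (M.Rop pbar wb)^[n] fun _ => 1 with hf
    have hfm : Measurable f := measurable_Rop_iterate hpbar hw n
    have hF := (M.measurable_pastCode j0 xp).mono pastAlgebra_le le_rfl
    have hB : MeasurableSet {x | ¬ 1 ≤ f x} := (measurableSet_le measurable_const hfm).compl
    have hq := measurable_dp hpbar
    have h0 := h.map_pastCode_apply hq hxp hwb hw (A := Set.univ) .univ (by rfl) hB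
    have hz : Measure.map (M.pastCode j0 xp) (Λ.restrict Set.univ) {x | ¬ 1 ≤ f x} = 0 := by
      rw [Measure.restrict_univ, Measure.map_apply hF hB]
      exact ih
    rw [hz, eq_comm, ENNReal.tsum_eq_zero] at h0
    have h1 : ∀ e, ∀ᵐ σ ∂Λ, M.transDensity j0 xp (M.dp pbar) e σ *
        {x | ¬ 1 ≤ f x}.indicator 1 (wb e (M.pastCode j0 xp σ)) = 0 := fun e => by
      have h2 := h0 e
      rw [Measure.restrict_univ, lintegral_eq_zero_iff
        (measurable_transDensity_mul hq hw (measurable_one.indicator hB) e)] at h2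
      exact h2
    filter_upwards [ae_all_iff.2 h1, h.ae_tsum_transDensity hq] with σ h2 h3
    rw [Function.iterate_succ_apply', ← hf, ← h3]
    refine ENNReal.tsum_le_tsum fun e => ?_
    rcases mul_eq_zero.1 (h2 e) with h4 | h4
    · simp [h4]
    · have h5 : 1 ≤ f (wb e (M.pastCode j0 xp σ)) := by
        by_contra h6
        simp [h6] at h4
      refine le_mul_of_le_of_one_le ?_ h5
      exact Set.indicator_le_self _ _ σ

theorem adjOp_map_of_Rop_le (h : M.IsState j0 xp (M.dp pbar) Λ) (hpbar : M.IsUCExtensionP pbar)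
    (hxp : ∀ j, xp j ∈ M.Kset j) (hwb : M.IsUCExtensionW wb) (hw : ∀ e, Measurable (wb e))
    (hR : ∀ σ ∈ M.code j0 xp ⁻¹' M.OmegaSet pbar wb, ∀ f : K → ℝ≥0∞, Measurable f →
      (∃ C : ℝ≥0∞, C ≠ ⊤ ∧ ∀ x, f x ≤ C) →
        M.Rop pbar wb f (M.code j0 xp σ) ≤ M.markovOp f (M.code j0 xp σ)) :
    M.adjOp (Measure.map (M.pastCode j0 xp) Λ) = Measure.map (M.pastCode j0 xp) Λ := by
  have := h.isProbabilityMeasure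
  have hF := (M.measurable_pastCode j0 xp).mono pastAlgebra_le le_rfl
  have hq := measurable_dp hpbar
  have hP : IsProbabilityMeasure (Measure.map (M.pastCode j0 xp) Λ) :=
    Measure.isProbabilityMeasure_map hF.aemeasurable
  have hΩ : ∀ᵐ σ ∂Λ, σ ∈ M.code j0 xp ⁻¹' M.OmegaSet pbar wb := by
    filter_upwards [ae_all_iff.2 fun n => h.ae_one_le_iterate_Rop hpbar hxp hwb hw (n + 1),
      h.ae_mem_codeDomain] with σ h1 h2
    refine Set.mem_iInter.2 fun n => ?_
    rw [code_eq_pastCode h2]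
    exact h1 n
  have hle : Measure.map (M.pastCode j0 xp) Λ ≤ M.adjOp (Measure.map (M.pastCode j0 xp) Λ) := by
    refine Measure.le_iff.2 fun B hB => ?_
    have hg : Measurable (B.indicator 1 : K → ℝ≥0∞) := measurable_one.indicator hB
    have h1 := h.map_pastCode_apply hq hxp hwb hw (A := Set.univ) .univ (by rfl) hB
    rw [Measure.restrict_univ] at h1
    rw [adjOp_apply_eq_lintegral M _ hB, lintegral_map (M.measurable_markovOp hg) hF, h1,
      ← lintegral_tsum fun e => (measurable_transDensity_mul hq hw hg e).aemeasurable]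
    refine lintegral_mono_ae ?_
    filter_upwards [hΩ, h.ae_mem_codeDomain] with σ h2 h3
    have h4 := hR σ h2 _ hg ⟨1, ENNReal.one_ne_top, fun x => Set.indicator_le_self _ _ x⟩
    rw [code_eq_pastCode h3] at h4
    refine le_trans (ENNReal.tsum_le_tsum fun e => ?_) h4
    gcongr
    exact Set.indicator_le_self _ _ σ
  refine (Measure.eq_of_le_of_measure_univ_eq hle ?_).symm
  rw [adjOp_univ]

variable [Countable N]

theorem preimage_interiorSet_ae_eq (h : M.IsState j0 xp q Λ) (hxp : ∀ j, xp j ∈ M.Kset j)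
    (hwb : M.IsUCExtensionW wb) :
    shiftMap E ⁻¹' M.interiorSet j0 xp =ᵐ[Λ] M.interiorSet j0 xp := by
  have := h.isProbabilityMeasure
  have hA := pastAlgebra_le _ (M.measurableSet_interiorSet j0 xp)
  refine (ae_eq_of_ae_subset_of_measure_ge ?_ ?_ hA.nullMeasurableSet (measure_ne_top _ _)).symm
  · filter_upwards [h.ae_mem_codeDomain] with σ hσ hσA
    exact shiftMap_mem_interiorSet hxp hwb hσ hσA
  · rw [h.measurePreserving.measure_preimage hA.nullMeasurableSet]

theorem adjOp_map_restrict_interiorSet (h : M.IsState j0 xp pbar Λ)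
    (hpbar : M.IsUCExtensionP pbar) (hxp : ∀ j, xp j ∈ M.Kset j) (hwb : M.IsUCExtensionW wb)
    (hw : ∀ e, Measurable (wb e)) :
    M.adjOp (Measure.map (M.pastCode j0 xp) (Λ.restrict (M.interiorSet j0 xp))) =
      Measure.map (M.pastCode j0 xp) (Λ.restrict (M.interiorSet j0 xp)) := by
  have hA := M.measurableSet_interiorSet j0 xp
  have hF := (M.measurable_pastCode j0 xp).mono pastAlgebra_le le_rfl
  ext B hB
  rw [h.map_pastCode_apply hpbar.measurable hxp hwb hw hA (h.preimage_interiorSet_ae_eq hxp hwb) hB,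
    adjOp_apply M _ hB]
  refine tsum_congr fun e => ?_
  rw [lintegral_map (M.measurable_p_mul (measurable_one.indicator hB) e) hF]
  exact setLIntegral_congr_fun (pastAlgebra_le _ hA)
    fun σ hσ => (transDensity_mul_of_mem hpbar hwb hσ e _).symm

theorem of_dp (h : M.IsState j0 xp (M.dp pbar) Λ) (hxp : ∀ j, xp j ∈ M.Kset j) :
    M.IsState j0 xp pbar Λ := by
  have hA := M.measurableSet_interiorSet j0 xp
  have h0 : Λ (M.interiorSet j0 xp) = 0 := by
    rw [← setLIntegral_one, lintegral_eq_tsum_next (ae_restrict_of_ae h.ae_mem_codeDomain)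
      measurable_const, ENNReal.tsum_eq_zero]
    intro e
    rw [setLIntegral_one, Measure.restrict_apply (measurableSet_next e), Set.inter_comm,
      h.measure_inter e _ hA, setLIntegral_congr_fun (pastAlgebra_le _ hA)
        fun σ hσ => transDensity_dp_of_mem hσ e, lintegral_zero]
  refine h.congr fun e => ?_
  filter_upwards [h.ae_mem_codeDomain, measure_eq_zero_iff_ae_notMem.1 h0] with σ h1 h2
  exact transDensity_dp_of_notMem hxp h1 h2 e

theorem adjOp_map_of_forall_dp (h : M.IsState j0 xp pbar Λ)
    (hpbar : M.IsUCExtensionP pbar) (hxp : ∀ j, xp j ∈ M.Kset j) (hwb : M.IsUCExtensionW wb)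
    (hw : ∀ e, Measurable (wb e))
    (hdp : ∀ Λ' : Measure (CodeSpace E), M.IsState j0 xp (M.dp pbar) Λ' →
      M.adjOp (Measure.map (M.pastCode j0 xp) Λ') = Measure.map (M.pastCode j0 xp) Λ') :
    M.adjOp (Measure.map (M.pastCode j0 xp) Λ) = Measure.map (M.pastCode j0 xp) Λ := by
  have := h.isProbabilityMeasure
  have hA := M.measurableSet_interiorSet j0 xp
  have hA' := pastAlgebra_le _ hA
  have hF := (M.measurable_pastCode j0 xp).mono pastAlgebra_le le_rfl
  set A := M.interiorSet j0 xp
  have hc : M.adjOp (Measure.map (M.pastCode j0 xp) (Λ.restrict Aᶜ)) =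
      Measure.map (M.pastCode j0 xp) (Λ.restrict Aᶜ) := by
    by_cases h0 : Λ Aᶜ = 0
    · rw [Measure.restrict_eq_zero.2 h0, Measure.map_zero]
      simpa using M.adjOp_smul 0 0
    · have h1 := h.cond hA.compl (h.preimage_interiorSet_ae_eq hxp hwb).compl h0
      have h2 : M.IsState j0 xp (M.dp pbar) (ProbabilityTheory.cond Λ Aᶜ) := by
        refine h1.congr fun e => ?_
        filter_upwards [h1.ae_mem_codeDomain, ProbabilityTheory.ae_cond_mem hA'.compl]
          with σ h3 h4
        exact (transDensity_dp_of_notMem hxp h3 h4 e).symm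
      have h3 : Λ.restrict Aᶜ = Λ Aᶜ • ProbabilityTheory.cond Λ Aᶜ := by
        rw [ProbabilityTheory.cond, smul_smul, ENNReal.mul_inv_cancel h0 (measure_ne_top _ _),
          one_smul]
      rw [h3, Measure.map_smul, adjOp_smul, hdp _ h2]
  rw [← Measure.restrict_add_restrict_compl (μ := Λ) hA', Measure.map_add _ _ hF, adjOp_add, hc,
    h.adjOp_map_restrict_interiorSet hpbar hxp hwb hw]

end IsState

end Consistency

end MarkovSystem

variable {K : Type*} [MetricSpace K] [CompleteSpace K] [MeasurableSpace K] [BorelSpace K]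
  {N E : Type*} [Countable N] [Countable E]

/-- (i) A uniformly continuous `M` is consistent iff `F(Λ) ∈ P(M)` for
every `Λ ∈ E_⊥(M)`. (ii) `M` is consistent if moreover `(Rf)(F(σ)) ≤ (Uf)(F(σ))` for every
`σ ∈ F⁻¹(Ω)` and every bounded nonnegative Borel `f`. -/
theorem consistency_iff_perp_and_of_R_le_U
    (M : MarkovSystem K N E) (j0 : N) (xp : N → K) (hxp : ∀ j, xp j ∈ M.Kset j)
    (huc : M.IsUniformlyContinuous)
    (pbar : E → K → ℝ) (hpbar : M.IsUCExtensionP pbar)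
    (wb : E → K → K) (hwb : M.IsUCExtensionW wb) :
    (M.IsConsistent j0 xp pbar ↔
      ∀ Λ : Measure (CodeSpace E), M.IsPerp j0 xp pbar Λ →
        M.IsInvariantMeasure (Measure.map (M.code j0 xp) Λ)) ∧
    ((∀ σ ∈ (M.code j0 xp) ⁻¹' (M.OmegaSet pbar wb), ∀ f : K → ℝ≥0∞, Measurable f →
        (∃ C : ℝ≥0∞, C ≠ ⊤ ∧ ∀ x, f x ≤ C) →
        M.Rop pbar wb f (M.code j0 xp σ) ≤ M.markovOp f (M.code j0 xp σ)) →
      M.IsConsistent j0 xp pbar) := by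
  obtain ⟨wm, hwm, hmeas, hR⟩ := MarkovSystem.exists_measurable_extension (xp j0) hwb pbar
  have hq := hpbar.measurable
  have hq' := MarkovSystem.measurable_dp hpbar
  have hcons : M.IsConsistent j0 xp pbar ↔ ∀ Λ, M.IsState j0 xp pbar Λ →
      M.adjOp (Measure.map (M.pastCode j0 xp) Λ) = Measure.map (M.pastCode j0 xp) Λ :=
    forall_congr' fun Λ => (imp_congr_left
      (MarkovSystem.isAsymptotic_iff_isState hq hpbar.nonneg)).trans
        (imp_congr_right fun h => h.isInvariantMeasure_map_code_iff)
  have hperp : (∀ Λ, M.IsPerp j0 xp pbar Λ →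
      M.IsInvariantMeasure (Measure.map (M.code j0 xp) Λ)) ↔
      ∀ Λ, M.IsState j0 xp (M.dp pbar) Λ →
        M.adjOp (Measure.map (M.pastCode j0 xp) Λ) = Measure.map (M.pastCode j0 xp) Λ :=
    forall_congr' fun Λ => (imp_congr_left
      (MarkovSystem.isAsymptotic_iff_isState hq' (MarkovSystem.dp_nonneg hpbar))).trans
        (imp_congr_right fun h => h.isInvariantMeasure_map_code_iff)
  rw [hcons, hperp]
  refine ⟨⟨fun H Λ h => H Λ (h.of_dp hxp), fun H Λ h =>
    h.adjOp_map_of_forall_dp hpbar hxp hwm hmeas H⟩, fun H Λ h =>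
    h.adjOp_map_of_forall_dp hpbar hxp hwm hmeas fun Λ' h' =>
      h'.adjOp_map_of_Rop_le hpbar hxp hwm hmeas ?_⟩
  simpa only [MarkovSystem.OmegaSet, hR] using H
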